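/- The expected cost of the randomized online algorithm gCHASE_s^r, which equals Σ_{t=1}^T ( (1 − p_t)·g_t(0) + p_t·g_t(1) + β·(p_t − p_{t−1})^+ ) with p_t := (β + Δ(t))/β (and p_0 = 0), is at most 2·Opt, for every β > 0 and every choice of nonnegative cost functions g_1,…,g_T. Hence gCHASE_s^r has expected competitive ratio 2 for problem SP. -/

import Mathlib

/-- The cost of a schedule `s` (with states encoded as reals): the operating
cost at time `t` is `(1 - s t) * g0 t + s t * g1 t` (for a fractional state
`p_t` this is the expected operating cost `(1 − p_t)·g_t(0) + p_t·g_t(1)`),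
plus the switching cost `β·(s t − s (t−1))⁺`. -/
noncomputable def cost (T : ℕ) (β : ℝ) (g0 g1 : ℕ → ℝ) (s : ℕ → ℝ) : ℝ :=
  ∑ t ∈ Finset.Icc 1 T, ((1 - s t) * g0 t + s t * g1 t + β * max (s t - s (t - 1)) 0)

/-- The cumulative cost difference `Δ(t)`, with `Δ(0) = −β` and
`Δ(t) = min{0, max{−β, Δ(t−1) + (g_t(0) − g_t(1))}}`. -/
noncomputable def Δfun (β : ℝ) (g0 g1 : ℕ → ℝ) : ℕ → ℝ
  | 0 => -β
  | t + 1 => min 0 (max (-β) (Δfun β g0 g1 t + (g0 (t + 1) - g1 (t + 1))))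

/-- The offline optimal value `Opt` of problem SP: the infimum of costs over
all binary schedules starting in state `0`. -/
noncomputable def opt (T : ℕ) (β : ℝ) (g0 g1 : ℕ → ℝ) : ℝ :=
  sInf {c : ℝ | ∃ s : ℕ → ℝ, (∀ t, s t = 0 ∨ s t = 1) ∧ s 0 = 0 ∧ c = cost T β g0 g1 s}

lemma step_aux (a b p q s s' : ℝ) (ha : 0 ≤ a) (hb : 0 ≤ b) (hp0 : 0 ≤ p) (hp1 : p ≤ 1)
    (hq : q = min 1 (max 0 (p + (a - b)))) (hs : s = 0 ∨ s = 1) (hs' : s' = 0 ∨ s' = 1) :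
    (1 - q) * a + q * b + max (q - p) 0 + (q ^ 2 / 2 + 2 * s' * (1 - q)) ≤
      2 * ((1 - s') * a + s' * b + max (s' - s) 0) + (p ^ 2 / 2 + 2 * s * (1 - p)) := by
  have key : (1 - q) * a + q * b + max (q - p) 0 + (q ^ 2 / 2 + 2 * s' * (1 - q)) ≤
      2 * ((1 - s') * a + s' * b) + (p ^ 2 / 2 + 2 * s' * (1 - p)) := by
    rcases le_total (p + (a - b)) 0 with h | h
    · rw [max_eq_left h, min_eq_right zero_le_one] at hq
      subst hq
      rw [max_eq_right (by linarith)]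
      rcases hs' with rfl | rfl <;> nlinarith
    · rw [max_eq_right h] at hq
      rcases le_total 1 (p + (a - b)) with h1 | h1
      · rw [min_eq_left h1] at hq
        subst hq
        rw [max_eq_left (by linarith)]
        rcases hs' with rfl | rfl <;> nlinarith
      · rw [min_eq_right h1] at hq
        obtain rfl : a = q - p + b := by linarith
        rcases le_total p q with h2 | h2
        · rw [max_eq_left (by linarith)]
          rcases hs' with rfl | rfl <;> nlinarith [sq_nonneg (q - p)]
        · rw [max_eq_right (by linarith)]
          rcases hs' with rfl | rfl <;> nlinarith [sq_nonneg (q - p)]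
  have h3 : 2 * s' * (1 - p) ≤ 2 * max (s' - s) 0 + 2 * s * (1 - p) := by
    rcases hs with rfl | rfl <;> rcases hs' with rfl | rfl <;> norm_num <;> linarith
  linarith

lemma D_bd (β : ℝ) (hβ : 0 < β) (g0 g1 : ℕ → ℝ) (t : ℕ) :
    -β ≤ Δfun β g0 g1 t ∧ Δfun β g0 g1 t ≤ 0 := by
  cases t with
  | zero => simp [Δfun, hβ.le]
  | succ t => simp [Δfun, hβ.le]

lemma main_aux (β : ℝ) (hβ : 0 < β) (g0 g1 : ℕ → ℝ) (s : ℕ → ℝ)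
    (hs : ∀ t, s t = 0 ∨ s t = 1) (h0 : s 0 = 0) (T : ℕ)
    (hg0 : ∀ t, 1 ≤ t → t ≤ T → 0 ≤ g0 t) (hg1 : ∀ t, 1 ≤ t → t ≤ T → 0 ≤ g1 t) :
    cost T β g0 g1 (fun t => (β + Δfun β g0 g1 t) / β) +
      β * (((β + Δfun β g0 g1 T) / β) ^ 2 / 2 + 2 * s T * (1 - (β + Δfun β g0 g1 T) / β))
      ≤ 2 * cost T β g0 g1 s := by
  induction T with
  | zero => simp [cost, Δfun, h0]
  | succ T ih =>
    have ih := ih (fun t h h' => hg0 t h (by omega)) (fun t h h' => hg1 t h (by omega))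
    have ha := hg0 (T + 1) (by omega) le_rfl
    have hb := hg1 (T + 1) (by omega) le_rfl
    unfold cost at ih ⊢
    rw [Finset.sum_Icc_succ_top (by omega), Finset.sum_Icc_succ_top (by omega)]
    simp only [Nat.add_sub_cancel]
    obtain ⟨l, u⟩ := D_bd β hβ g0 g1 T
    have hq : (β + Δfun β g0 g1 (T + 1)) / β = min 1 (max 0 ((β + Δfun β g0 g1 T) / β +
        (g0 (T + 1) / β - g1 (T + 1) / β))) := by
      have e : (β + Δfun β g0 g1 T) / β + (g0 (T + 1) / β - g1 (T + 1) / β) =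
        (β + (Δfun β g0 g1 T + (g0 (T + 1) - g1 (T + 1)))) / β := by ring
      rw [e, Δfun, ← min_add_add_left, ← max_add_add_left, ← min_div_div_right hβ.le,
        ← max_div_div_right hβ.le]
      simp [hβ.ne']
    have st := step_aux (g0 (T + 1) / β) (g1 (T + 1) / β) ((β + Δfun β g0 g1 T) / β)
      ((β + Δfun β g0 g1 (T + 1)) / β) (s T) (s (T + 1)) (by positivity) (by positivity)
      (div_nonneg (by linarith) hβ.le) ((div_le_one hβ).2 (by linarith)) hq (hs _) (hs _)
    have e0 : g0 (T + 1) = β * (g0 (T + 1) / β) := by field_simp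
    have e1 : g1 (T + 1) = β * (g1 (T + 1) / β) := by field_simp
    have st := mul_le_mul_of_nonneg_left st hβ.le
    generalize (β + Δfun β g0 g1 (T + 1)) / β = q at *
    generalize (β + Δfun β g0 g1 T) / β = p at *
    generalize g0 (T + 1) / β = a at *
    generalize g1 (T + 1) / β = b at *
    rw [e0, e1]
    linarith

/-- the expected cost of the randomized online algorithm
gCHASE_s^r, namely `Σ_{t=1}^T ((1 − p_t)·g_t(0) + p_t·g_t(1) + β·(p_t − p_{t−1})⁺)`
with marginal probabilities `p_t = (β + Δ(t))/β` (note `p_0 = (β + Δ(0))/β = 0`),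
is at most `2·Opt`; hence gCHASE_s^r has expected competitive ratio 2. -/
theorem stmt4 (T : ℕ) (β : ℝ) (hβ : 0 < β) (g0 g1 : ℕ → ℝ)
    (hg0 : ∀ t, 1 ≤ t → t ≤ T → 0 ≤ g0 t) (hg1 : ∀ t, 1 ≤ t → t ≤ T → 0 ≤ g1 t) :
    cost T β g0 g1 (fun t => (β + Δfun β g0 g1 t) / β) ≤ 2 * opt T β g0 g1 := by
  have h : cost T β g0 g1 (fun t => (β + Δfun β g0 g1 t) / β) / 2 ≤ opt T β g0 g1 := by
    apply le_csInf
    · exact ⟨_, fun _ => 0, fun _ => Or.inl rfl, rfl, rfl⟩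
    · rintro c ⟨s, hs, h0, rfl⟩
      have := main_aux β hβ g0 g1 s hs h0 T hg0 hg1
      obtain ⟨l, u⟩ := D_bd β hβ g0 g1 T
      have hp : (β + Δfun β g0 g1 T) / β ≤ 1 := (div_le_one hβ).2 (by linarith)
      have hsT : 0 ≤ s T := by rcases hs T with h | h <;> simp [h]
      have : 0 ≤ β * (((β + Δfun β g0 g1 T) / β) ^ 2 / 2 +
          2 * s T * (1 - (β + Δfun β g0 g1 T) / β)) := by
        have := sub_nonneg.2 hp
        positivity
      linarith
  linarith
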